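/- Fix a real number c with 0 ≤ c < 1 and set ξ∧ = (4−c)/3 and η∧ = (3 − 4c + c²)/(3√(1−c²)). Then ψ(0, ξ∧, η∧) = 0, ∂ψ/∂t(1, ξ∧, η∧) = 0, and ψ(t, ξ∧, η∧) ≥ 0 for all t ∈ [−1,1]; moreover, for every pair (ξ̄, η̄) with ξ̄ > 0 such that ψ(t, ξ̄, η̄) ≥ 0 for all t ∈ [−1,1] and sup over t ∈ [−1,1] of |ψ(t, ξ̄, η̄)| ≤ sup over t ∈ [−1,1] of |ψ(t, ξ∧, η∧)|, one has (ξ̄, η̄) = (ξ∧, η∧); i.e., (ξ∧, η∧) induces the unique optimal outer cubic G⁰ approximant. -/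

import Mathlib

/-- Simplified radial error of the cubic G⁰ Bézier approximant of the unit circular arc. -/
noncomputable def psiC (c t ξ η : ℝ) : ℝ :=
  (1/16) * (t^2 - 1) *
    ((3*η - Real.sqrt (1 - c^2))^2*t^4
      + (16*(1 - c^2) - 9*(η + Real.sqrt (1 - c^2))^2 + 9*(ξ - c)^2)*t^2
      + (16 - (3*ξ + c)^2))

noncomputable def g1 (c ξ : ℝ) : ℝ :=
  2187*ξ^3 + 3807*c*ξ^2 + (1953*c^2 - 3840)*ξ + 245*c^3 - 4352*c

noncomputable def ximin (c : ℝ) : ℝ := (-5*c + 8*Real.sqrt 2*Real.sqrt (9 - c^2))/27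

noncomputable def ximax (c : ℝ) : ℝ := (4 - c)/3

/-- Sup over `t ∈ [−1,1]` of `|f t|`. -/
noncomputable def errSup (f : ℝ → ℝ) : ℝ :=
  sSup ((fun t => |f t|) '' Set.Icc (-1 : ℝ) 1)

/-!
Put `s = √(1 - c²)`. The radial error is a combination of `(3ξ + c)² - 16`, `ηs + ξc - 1` and
`(3η - s)²` whose coefficients are nonnegative on `[-1, 1]`, and the first two numbers are, up to
constants, `ψ(0)` and `-ψ'(1)`. Hence an approximant is outer iff both are nonnegative, and
`(ξ∧, η∧)` is the point with `ξ > 0` where both vanish, so its error is a multiple of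
`t²(1 - t²)²`, with maximum at `t = 1/√3`.
At this same `t`, every other outer approximant with `ξ > 0` has a strictly larger error: the
decrease of `(3η - s)²` allowed by `ηs + ξc ≥ 1` is outweighed by the increase of `(3ξ + c)²`.
-/

open Set

/-- The ordinate `η∧` of the optimal outer approximant, whose abscissa `ξ∧` is `ximax c`. It is
meaningful for `|c| < 1`; elsewhere the denominator vanishes and the value is `0`. -/
noncomputable def etaOuter (c : ℝ) : ℝ := (3 - 4 * c + c ^ 2) / (3 * √(1 - c ^ 2))

/-- The approximant of the arc with parameter `c` given by `(ξ, η)` is outer: its simplified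
radial error is nonnegative on `[-1, 1]`. -/
def IsOuterApproximant (c ξ η : ℝ) : Prop :=
  ∀ t ∈ Icc (-1 : ℝ) 1, 0 ≤ psiC c t ξ η

section ErrSup

variable {f : ℝ → ℝ}

theorem abs_le_errSup (hf : ContinuousOn f (Icc (-1) 1)) {t : ℝ} (ht : t ∈ Icc (-1 : ℝ) 1) :
    |f t| ≤ errSup f :=
  le_csSup (isCompact_Icc.image_of_continuousOn hf.abs).bddAbove (mem_image_of_mem _ ht)

theorem errSup_le {M : ℝ} (h : ∀ t ∈ Icc (-1 : ℝ) 1, |f t| ≤ M) : errSup f ≤ M :=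
  csSup_le ((nonempty_Icc.2 (by norm_num)).image _) (forall_mem_image.2 h)

end ErrSup

theorem deriv_nonpos_of_isMinOn_right {f : ℝ → ℝ} {f' a b : ℝ} (hab : a < b)
    (hmin : IsMinOn f (Icc a b) b) (hf : HasDerivWithinAt f f' (Icc a b) b) : f' ≤ 0 := by
  have leftward : a - b ∈ posTangentConeAt (Icc a b) b :=
    sub_mem_posTangentConeAt_of_segment_subset
      ((convex_Icc a b).segment_subset (right_mem_Icc.2 hab.le) (left_mem_Icc.2 hab.le))
  have increment : 0 ≤ (a - b) * f' := by
    simpa using hmin.localize.hasFDerivWithinAt_nonneg hf.hasFDerivWithinAt leftward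
  exact nonpos_of_mul_nonneg_right increment (sub_neg.2 hab)

theorem mul_one_sub_sq_le {u : ℝ} (hu : u ≤ 4 / 3) : u * (1 - u) ^ 2 ≤ 4 / 27 := by
  have factored : 4 / 27 - u * (1 - u) ^ 2 = (u - 1 / 3) ^ 2 * (4 / 3 - u) := by ring
  exact sub_nonneg.1 (factored ▸ mul_nonneg (sq_nonneg _) (sub_nonneg.2 hu))

theorem inv_sqrt_three_sq : (√3)⁻¹ ^ 2 = 1 / 3 := by
  rw [inv_pow, Real.sq_sqrt (by norm_num), one_div]

theorem inv_sqrt_three_mem_Icc : (√3)⁻¹ ∈ Icc (-1 : ℝ) 1 :=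
  abs_le.1 (abs_le_one_iff_mul_self_le_one.2 (by rw [← sq, inv_sqrt_three_sq]; norm_num))

section Approximant

variable {c ξ η : ℝ}

theorem sq_sqrt_one_sub_sq (hc : |c| ≤ 1) : √(1 - c ^ 2) ^ 2 = 1 - c ^ 2 :=
  Real.sq_sqrt (sub_nonneg.2 ((sq_le_one_iff_abs_le_one c).2 hc))

theorem sqrt_one_sub_sq_pos (hc : |c| < 1) : 0 < √(1 - c ^ 2) :=
  Real.sqrt_pos.2 (sub_pos.2 ((sq_lt_one_iff_abs_lt_one c).2 hc))

theorem continuous_psiC (c ξ η : ℝ) : Continuous (fun t => psiC c t ξ η) := by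
  unfold psiC
  fun_prop

theorem psiC_eq (hc : |c| ≤ 1) (t ξ η : ℝ) :
    psiC c t ξ η = (1 - t ^ 2) / 16 *
      ((1 - t ^ 2) * ((3 * ξ + c) ^ 2 - 16) + 24 * t ^ 2 * (η * √(1 - c ^ 2) + ξ * c - 1)
        + (3 * η - √(1 - c ^ 2)) ^ 2 * (t ^ 2 * (1 - t ^ 2))) := by
  unfold psiC
  linear_combination (t ^ 2 * (t ^ 2 - 1) / 2) * (-sq_sqrt_one_sub_sq hc)

theorem psiC_zero (c ξ η : ℝ) : psiC c 0 ξ η = ((3 * ξ + c) ^ 2 - 16) / 16 := by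
  unfold psiC
  ring

theorem psiC_one (c ξ η : ℝ) : psiC c 1 ξ η = 0 := by
  simp [psiC]

theorem psiC_inv_sqrt_three (hc : |c| ≤ 1) (ξ η : ℝ) :
    psiC c (√3)⁻¹ ξ η =
      ((3 * η - √(1 - c ^ 2)) ^ 2 + 3 * ((3 * ξ + c) ^ 2 - 16)
        + 36 * (η * √(1 - c ^ 2) + ξ * c - 1)) / 108 := by
  rw [psiC_eq hc, inv_sqrt_three_sq]
  ring

theorem hasDerivAt_psiC_one (hc : |c| ≤ 1) (ξ η : ℝ) :
    HasDerivAt (fun t => psiC c t ξ η) (-3 * (η * √(1 - c ^ 2) + ξ * c - 1)) 1 := by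
  let cofactor (t : ℝ) : ℝ :=
    (3 * η - √(1 - c ^ 2)) ^ 2 * t ^ 4
      + (16 * (1 - c ^ 2) - 9 * (η + √(1 - c ^ 2)) ^ 2 + 9 * (ξ - c) ^ 2) * t ^ 2
      + (16 - (3 * ξ + c) ^ 2)
  have cofactor_deriv : HasDerivAt cofactor (deriv cofactor 1) 1 :=
    DifferentiableAt.hasDerivAt (by fun_prop)
  have factor_deriv : HasDerivAt (fun t : ℝ => 1 / 16 * (t ^ 2 - 1)) (1 / 8) 1 :=
    (((hasDerivAt_pow 2 (1 : ℝ)).sub_const 1).const_mul (1 / 16)).congr_deriv (by norm_num)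
  refine (factor_deriv.fun_mul cofactor_deriv).congr_deriv ?_
  dsimp only [cofactor]
  linear_combination -sq_sqrt_one_sub_sq hc

theorem isOuterApproximant_iff (hc : |c| ≤ 1) :
    IsOuterApproximant c ξ η ↔
      16 ≤ (3 * ξ + c) ^ 2 ∧ 1 ≤ η * √(1 - c ^ 2) + ξ * c := by
  constructor
  · intro outer
    have error_zero : 0 ≤ psiC c 0 ξ η := outer 0 (by norm_num)
    have isMinOn_one : IsMinOn (fun t => psiC c t ξ η) (Icc (-1) 1) 1 := fun t ht => by
      simpa only [mem_ofPred_eq, psiC_one] using outer t ht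
    have deriv_one_nonpos : -3 * (η * √(1 - c ^ 2) + ξ * c - 1) ≤ 0 :=
      deriv_nonpos_of_isMinOn_right (by norm_num) isMinOn_one
        (hasDerivAt_psiC_one hc ξ η).hasDerivWithinAt
    rw [psiC_zero] at error_zero
    constructor <;> linarith
  · rintro ⟨h_zero, h_one⟩ t ht
    have ht' : 0 ≤ 1 - t ^ 2 := sub_nonneg.2 ((sq_le_one_iff_abs_le_one t).2 (abs_le.2 ht))
    have := sub_nonneg.2 h_zero
    have := sub_nonneg.2 h_one
    rw [psiC_eq hc]
    positivity

theorem three_mul_ximax_add (c : ℝ) : 3 * ximax c + c = 4 := by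
  unfold ximax
  ring

theorem etaOuter_mul_sqrt_add (hc : |c| < 1) :
    etaOuter c * √(1 - c ^ 2) + ximax c * c = 1 := by
  have := (sqrt_one_sub_sq_pos hc).ne'
  unfold etaOuter ximax
  field_simp
  ring

theorem three_mul_etaOuter_sub_mul_sqrt (hc : |c| < 1) :
    (3 * etaOuter c - √(1 - c ^ 2)) * √(1 - c ^ 2) = 2 * (1 - c) ^ 2 := by
  have tangency := etaOuter_mul_sqrt_add hc
  unfold ximax at tangency
  linear_combination 3 * tangency - sq_sqrt_one_sub_sq hc.le

theorem isOuterApproximant_ximax_etaOuter (hc : |c| < 1) :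
    IsOuterApproximant c (ximax c) (etaOuter c) :=
  (isOuterApproximant_iff hc.le).2
    ⟨by rw [three_mul_ximax_add]; norm_num, (etaOuter_mul_sqrt_add hc).ge⟩

theorem psiC_ximax_etaOuter (hc : |c| < 1) (t : ℝ) :
    psiC c t (ximax c) (etaOuter c) =
      (3 * etaOuter c - √(1 - c ^ 2)) ^ 2 / 16 * (t ^ 2 * (1 - t ^ 2) ^ 2) := by
  rw [psiC_eq hc.le, three_mul_ximax_add, etaOuter_mul_sqrt_add hc]
  ring

theorem errSup_psiC_ximax_etaOuter_le (hc : |c| < 1) :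
    errSup (fun t => psiC c t (ximax c) (etaOuter c)) ≤
      (3 * etaOuter c - √(1 - c ^ 2)) ^ 2 / 108 := by
  refine errSup_le fun t ht => ?_
  have ht' : t ^ 2 ≤ 1 := (sq_le_one_iff_abs_le_one t).2 (abs_le.2 ht)
  rw [abs_of_nonneg (isOuterApproximant_ximax_etaOuter hc t ht), psiC_ximax_etaOuter hc]
  calc (3 * etaOuter c - √(1 - c ^ 2)) ^ 2 / 16 * (t ^ 2 * (1 - t ^ 2) ^ 2)
      ≤ (3 * etaOuter c - √(1 - c ^ 2)) ^ 2 / 16 * (4 / 27) := by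
        gcongr
        exact mul_one_sub_sq_le (by linarith)
    _ = (3 * etaOuter c - √(1 - c ^ 2)) ^ 2 / 108 := by ring

theorem mul_etaOuter_sub_le (hc : |c| < 1) (hξ : 4 ≤ 3 * ξ + c)
    (hη : 1 ≤ η * √(1 - c ^ 2) + ξ * c) :
    (3 * etaOuter c - √(1 - c ^ 2)) * (etaOuter c - η) ≤ 2 / 3 * (3 * ξ + c - 4) := by
  have s_pos := sqrt_one_sub_sq_pos hc
  have s_sq := sq_sqrt_one_sub_sq hc.le
  have mul_sqrt_eq := three_mul_etaOuter_sub_mul_sqrt hc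
  have tangency := etaOuter_mul_sqrt_add hc
  set s := √(1 - c ^ 2)
  have drop_le : (etaOuter c - η) * s ≤ (3 * ξ + c - 4) * c / 3 := by
    unfold ximax at tangency
    linarith
  have coeff_le : (1 - c) ^ 2 * c ≤ s ^ 2 := by
    have : 0 ≤ (1 - c) * (1 + c ^ 2) :=
      mul_nonneg (sub_nonneg.2 (abs_lt.1 hc).2.le) (by positivity)
    linarith
  refine le_of_mul_le_mul_right ?_ (pow_pos s_pos 2)
  calc (3 * etaOuter c - s) * (etaOuter c - η) * s ^ 2
      = 2 * (1 - c) ^ 2 * ((etaOuter c - η) * s) := by rw [← mul_sqrt_eq]; ring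
    _ ≤ 2 * (1 - c) ^ 2 * ((3 * ξ + c - 4) * c / 3) := by gcongr
    _ = 2 / 3 * (3 * ξ + c - 4) * ((1 - c) ^ 2 * c) := by ring
    _ ≤ 2 / 3 * (3 * ξ + c - 4) * s ^ 2 := by
        have := sub_nonneg.2 hξ
        gcongr

theorem sq_three_mul_etaOuter_sub_add_le (hc : |c| < 1) (hξ : 4 ≤ 3 * ξ + c)
    (hη : 1 ≤ η * √(1 - c ^ 2) + ξ * c) :
    (3 * etaOuter c - √(1 - c ^ 2)) ^ 2 + 20 * (3 * ξ + c - 4) + 9 * (etaOuter c - η) ^ 2 ≤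
      (3 * η - √(1 - c ^ 2)) ^ 2 + 3 * ((3 * ξ + c) ^ 2 - 16) := by
  have := mul_etaOuter_sub_le hc hξ hη
  have := sq_nonneg (3 * ξ + c - 4)
  linarith

theorem IsOuterApproximant.four_le_three_mul_add (outer : IsOuterApproximant c ξ η) (hc : |c| ≤ 1)
    (hξ : 0 < ξ) : 4 ≤ 3 * ξ + c := by
  have four_le_abs : 4 ≤ |3 * ξ + c| := by
    refine le_of_pow_le_pow_left₀ two_ne_zero (abs_nonneg _) ?_
    rw [sq_abs]
    linarith [((isOuterApproximant_iff hc).1 outer).1]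
  refine (le_abs.1 four_le_abs).resolve_right ?_
  linarith [(abs_le.1 hc).1]

theorem IsOuterApproximant.eq_of_errSup_le (outer : IsOuterApproximant c ξ η) (hc : |c| < 1)
    (hξ : 0 < ξ)
    (hle : errSup (fun t => psiC c t ξ η) ≤
      errSup (fun t => psiC c t (ximax c) (etaOuter c))) :
    ξ = ximax c ∧ η = etaOuter c := by
  have ξ_ge : 4 ≤ 3 * ξ + c := outer.four_le_three_mul_add hc.le hξ
  have tangent_ge := ((isOuterApproximant_iff hc.le).1 outer).2
  have error_le : psiC c (√3)⁻¹ ξ η ≤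
      (3 * etaOuter c - √(1 - c ^ 2)) ^ 2 / 108 :=
    calc psiC c (√3)⁻¹ ξ η
        ≤ |psiC c (√3)⁻¹ ξ η| := le_abs_self _
      _ ≤ errSup (fun t => psiC c t ξ η) :=
          abs_le_errSup (continuous_psiC c ξ η).continuousOn inv_sqrt_three_mem_Icc
      _ ≤ errSup (fun t => psiC c t (ximax c) (etaOuter c)) := hle
      _ ≤ _ := errSup_psiC_ximax_etaOuter_le hc
  rw [psiC_inv_sqrt_three hc.le] at error_le
  have gap := sq_three_mul_etaOuter_sub_add_le hc ξ_ge tangent_ge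
  have η_sq := sq_nonneg (etaOuter c - η)
  have ξ_eq : ξ = ximax c := by linarith [three_mul_ximax_add c]
  have η_sq_eq : (etaOuter c - η) ^ 2 = 0 := by linarith
  exact ⟨ξ_eq, (sub_eq_zero.1 (sq_eq_zero_iff.1 η_sq_eq)).symm⟩

end Approximant

theorem stmt_15_general (c : ℝ) (hc : |c| < 1) :
    psiC c 0 (ximax c) (etaOuter c) = 0 ∧
    deriv (fun t => psiC c t (ximax c) (etaOuter c)) 1 = 0 ∧
    IsOuterApproximant c (ximax c) (etaOuter c) ∧
    ∀ ξ η : ℝ, 0 < ξ → IsOuterApproximant c ξ η →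
      errSup (fun t => psiC c t ξ η) ≤ errSup (fun t => psiC c t (ximax c) (etaOuter c)) →
      ξ = ximax c ∧ η = etaOuter c := by
  refine ⟨?_, ?_, isOuterApproximant_ximax_etaOuter hc,
    fun ξ η hξ outer hle => outer.eq_of_errSup_le hc hξ hle⟩
  · rw [psiC_zero, three_mul_ximax_add]
    norm_num
  · rw [(hasDerivAt_psiC_one hc.le _ _).deriv, etaOuter_mul_sqrt_add hc]
    norm_num

/-- `(ξ∧, η∧) = ((4−c)/3, (3−4c+c²)/(3√(1−c²)))` induces the unique optimal outer
cubic G⁰ approximant. -/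
theorem stmt_15 (c : ℝ) (hc0 : 0 ≤ c) (hc1 : c < 1) :
    psiC c 0 ((4 - c)/3) ((3 - 4*c + c^2)/(3*Real.sqrt (1 - c^2))) = 0 ∧
    deriv (fun t => psiC c t ((4 - c)/3) ((3 - 4*c + c^2)/(3*Real.sqrt (1 - c^2)))) 1 = 0 ∧
    (∀ t ∈ Set.Icc (-1 : ℝ) 1,
      0 ≤ psiC c t ((4 - c)/3) ((3 - 4*c + c^2)/(3*Real.sqrt (1 - c^2)))) ∧
    ∀ ξb ηb : ℝ, 0 < ξb → (∀ t ∈ Set.Icc (-1 : ℝ) 1, 0 ≤ psiC c t ξb ηb) →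
      errSup (fun t => psiC c t ξb ηb) ≤
        errSup (fun t => psiC c t ((4 - c)/3) ((3 - 4*c + c^2)/(3*Real.sqrt (1 - c^2)))) →
      ξb = (4 - c)/3 ∧ ηb = (3 - 4*c + c^2)/(3*Real.sqrt (1 - c^2)) :=
  stmt_15_general c (abs_lt.2 ⟨by linarith, hc1⟩)
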